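/- arXiv:2008.07778 — 2 statements merged into one kernel-verified Lean document; each statement's English description precedes it below -/
import Mathlib

section
/- Let n ≥ 1, let A : ℝ → Matrix (Fin n) (Fin n) ℂ be continuous, and let Y : ℝ → Matrix (Fin n) (Fin n) ℂ be differentiable with Y'(x) = A(x) * Y(x) for all x ∈ ℝ. Then for all x₀, x ∈ ℝ one has det(Y(x)) = det(Y(x₀)) · exp(∫_{x₀}^{x} trace(A(t)) dt). -/
attribute [local instance] Matrix.normedAddCommGroup Matrix.normedSpace

theorem det_hasDerivAt_aux (n : ℕ) (B : Matrix (Fin n) (Fin n) ℂ)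
    (Y : ℝ → Matrix (Fin n) (Fin n) ℂ) (x : ℝ)
    (hY : HasDerivAt Y (B * Y x) x) :
    HasDerivAt (fun t => (Y t).det) (B.trace * (Y x).det) x := by
  let f : ContinuousMultilinearMap ℂ (fun _ : Fin n => (Fin n → ℂ)) ℂ :=
    { toMultilinearMap :=
        (Matrix.detRowAlternating : (Fin n → ℂ) [⋀^Fin n]→ₗ[ℂ] ℂ).toMultilinearMap
      cont := by
        change Continuous (fun M : Matrix (Fin n) (Fin n) ℂ => M.det)
        exact Continuous.matrix_det continuous_id }
  have h1 := (f.hasFDerivAt (x := Y x)).restrictScalars ℝ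
  have h2 : HasDerivAt (F := Fin n → Fin n → ℂ) Y (B * Y x) x := hY
  have h3 := h1.comp_hasDerivAt x h2
  have h4 : f.linearDeriv (Y x) (B * Y x) = B.trace * (Y x).det := by
    refine (ContinuousMultilinearMap.linearDeriv_apply f (Y x) (B * Y x)).trans ?_
    rw [Matrix.trace, Finset.sum_mul]
    refine Finset.sum_congr rfl fun i _ => ?_
    have h := Matrix.det_updateRow_sum (Y x) i (B i)
    have e : (∑ k, B i k • (Y x) k) = (B * Y x) i := by
      ext j
      simp [Matrix.mul_apply]
    rw [e] at h
    exact h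
  rw [← h4]
  exact h3

/-- Abel's theorem (Liouville's formula): if `Y' = A x * Y` with `A` continuous,
then `det (Y x) = det (Y x₀) * exp (∫_{x₀}^x tr (A t) dt)`. -/
theorem abel_liouville (n : ℕ) (hn : 1 ≤ n)
    (A Y : ℝ → Matrix (Fin n) (Fin n) ℂ)
    (hA : Continuous A)
    (hY : ∀ x : ℝ, HasDerivAt Y (A x * Y x) x) :
    ∀ x₀ x : ℝ, (Y x).det = (Y x₀).det * Complex.exp (∫ t in x₀..x, (A t).trace) := by
  intro x₀ x
  have hc : Continuous fun t => (A t).trace := hA.matrix_trace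
  have hI : ∀ s : ℝ, HasDerivAt (fun u => ∫ t in x₀..u, (A t).trace) (A s).trace s :=
    fun s => hc.integral_hasStrictDerivAt x₀ s |>.hasDerivAt
  have hg : ∀ s : ℝ, HasDerivAt
      (fun u => (Y u).det * Complex.exp (-∫ t in x₀..u, (A t).trace)) 0 s := by
    intro s
    have h := (det_hasDerivAt_aux n (A s) Y s (hY s)).mul (hI s).neg.cexp
    refine HasDerivAt.congr_deriv h ?_
    change (A s).trace * (Y s).det * Complex.exp (-∫ t in x₀..s, (A t).trace) +
      (Y s).det * (Complex.exp (-∫ t in x₀..s, (A t).trace) * -(A s).trace) = 0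
    ring
  have hconst := is_const_of_deriv_eq_zero (fun s => (hg s).differentiableAt)
    (fun s => (hg s).deriv) x x₀
  simp only [intervalIntegral.integral_same, neg_zero, Complex.exp_zero, mul_one] at hconst
  rw [← hconst, mul_assoc, ← Complex.exp_add]
  simp
end

section
/- Let n ≥ 1, let A : ℝ → Matrix (Fin n) (Fin n) ℂ be continuous with trace(A(x)) = 0 for all x ∈ ℝ, and let Y : ℝ → Matrix (Fin n) (Fin n) ℂ be differentiable with Y'(x) = A(x) * Y(x) for all x ∈ ℝ. Then the function x ↦ det(Y(x)) is constant on ℝ. -/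
attribute [local instance] Matrix.normedAddCommGroup Matrix.normedSpace

/-- Liouville's formula with a traceless coefficient matrix: if `Y' = A x * Y`
with `A` continuous and `tr (A x) = 0` for all `x`, then `x ↦ det (Y x)` is constant. -/
theorem det_const_of_traceless (n : ℕ) (hn : 1 ≤ n)
    (A Y : ℝ → Matrix (Fin n) (Fin n) ℂ)
    (hA : Continuous A)
    (htr : ∀ x : ℝ, (A x).trace = 0)
    (hY : ∀ x : ℝ, HasDerivAt Y (A x * Y x) x) :
    ∀ x y : ℝ, (Y x).det = (Y y).det := by
  have hent : ∀ x i j, HasDerivAt (fun t => Y t i j) ((A x * Y x) i j) x := by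
    intro x i j
    have h1 : HasDerivAt (fun t => Y t i) ((A x * Y x) i) x := hasDerivAt_pi.mp (hY x) i
    exact hasDerivAt_pi.mp h1 j
  have hdet : ∀ M : Matrix (Fin n) (Fin n) ℂ,
      M.det = ∑ σ : Equiv.Perm (Fin n), ((Equiv.Perm.sign σ : ℤ) : ℂ) * ∏ i, M i (σ i) := by
    intro M
    rw [← Matrix.det_transpose, Matrix.det_apply']
    rfl
  have hd : ∀ x, HasDerivAt (fun t => (Y t).det) 0 x := by
    intro x
    have h1 : HasDerivAt (fun t => ∑ σ : Equiv.Perm (Fin n),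
        ((Equiv.Perm.sign σ : ℤ) : ℂ) * ∏ i, Y t i (σ i))
        (∑ σ : Equiv.Perm (Fin n), ((Equiv.Perm.sign σ : ℤ) : ℂ) *
          ∑ i, (∏ j ∈ Finset.univ.erase i, Y x j (σ j)) • (A x * Y x) i (σ i)) x := by
      refine HasDerivAt.fun_sum fun σ _ => HasDerivAt.const_mul _ ?_
      exact HasDerivAt.fun_finsetProd fun i _ => hent x i (σ i)
    have h2 : (∑ σ : Equiv.Perm (Fin n), ((Equiv.Perm.sign σ : ℤ) : ℂ) *
          ∑ i, (∏ j ∈ Finset.univ.erase i, Y x j (σ j)) • (A x * Y x) i (σ i))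
        = ∑ i, ((Y x).updateRow i ((A x * Y x) i)).det := by
      simp_rw [hdet, Finset.mul_sum]
      rw [Finset.sum_comm]
      refine Finset.sum_congr rfl fun i _ => Finset.sum_congr rfl fun σ _ => ?_
      rw [← Finset.prod_erase_mul _ _ (Finset.mem_univ i), Matrix.updateRow_self, smul_eq_mul]
      congr 2
      refine Finset.prod_congr rfl fun j hj => ?_
      rw [Matrix.updateRow_ne (Finset.ne_of_mem_erase hj)]
    have h3 : ∀ i, ((Y x).updateRow i ((A x * Y x) i)).det = A x i i * (Y x).det := by
      intro i
      have : (A x * Y x) i = ∑ k, A x i k • Y x k := by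
        ext j
        simp [Matrix.mul_apply]
      rw [this, Matrix.det_updateRow_sum, smul_eq_mul]
    have h4 : ∑ i, A x i i = 0 := htr x
    rw [h2] at h1
    simp_rw [h3] at h1
    rw [← Finset.sum_mul, h4, zero_mul] at h1
    simp_rw [← hdet] at h1
    exact h1
  exact is_const_of_deriv_eq_zero (fun x => (hd x).differentiableAt) (fun x => (hd x).deriv)
end
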